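/- Universal property of TS^ℓ(A): for every unital associative k-algebra B and every Lie algebra homomorphism ρ : A^- → B^- satisfying the (ℓ+1)-st symmetric identity and ρ(1_A) = ℓ·1_B, there exists a unique unital algebra homomorphism φ : TS^ℓ(A) → B with φ ∘ sym_ℓ = ρ. -/

import Mathlib

open PiTensorProduct
open scoped TensorProduct

/-- The symmetrization map `sym_ℓ(a) = Σ_{i=1}^ℓ 1^{⊗(i-1)} ⊗ a ⊗ 1^{⊗(ℓ-i)}`. -/
noncomputable def symTen (k A : Type*) [Field k] [Ring A] [Algebra k A] (ℓ : ℕ)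
    (a : A) : ⨂[k] _ : Fin ℓ, A :=
  ∑ i : Fin ℓ, tprod k (Function.update (fun _ : Fin ℓ => (1 : A)) i a)

/-- The number of cycles of length `j` (including fixed points) of a permutation of `Fin m`. -/
def cycleCount {m : ℕ} (σ : Equiv.Perm (Fin m)) (j : ℕ) : ℕ :=
  (σ.cycleType + Multiset.replicate (m - σ.cycleType.sum) 1).count j

/-- The left-hand side of the `m`-th symmetric identity for a linear map `ρ : A → B`,
`Σ_p sgn(C(p))·|C(p)|·ρ(a)^{p_1}⋯ρ(a^m)^{p_m}`, written as a sum over all of `S_m`. -/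
noncomputable def symIdentLHS {A B : Type*} [Ring A] [Ring B] (ρ : A → B) (m : ℕ) (a : A) : B :=
  ∑ σ : Equiv.Perm (Fin m), (Equiv.Perm.sign σ : ℤ) •
    ((List.range m).map (fun j => ρ (a ^ (j + 1)) ^ cycleCount σ (j + 1))).prod

section TS
variable (k A : Type*) [Field k] [Ring A] [Algebra k A] (ℓ : ℕ)

lemma reindex_one (σ : Equiv.Perm (Fin ℓ)) :
    PiTensorProduct.reindex k (fun _ : Fin ℓ => A) σ 1 = 1 := by
  rw [PiTensorProduct.one_def, PiTensorProduct.reindex_tprod]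
  rfl

lemma reindex_mul (σ : Equiv.Perm (Fin ℓ)) (x y : ⨂[k] _ : Fin ℓ, A) :
    PiTensorProduct.reindex k (fun _ : Fin ℓ => A) σ (x * y) =
      PiTensorProduct.reindex k (fun _ : Fin ℓ => A) σ x *
        PiTensorProduct.reindex k (fun _ : Fin ℓ => A) σ y := by
  have h : ∀ f g : Fin ℓ → A,
      PiTensorProduct.reindex k (fun _ : Fin ℓ => A) σ (tprod k f * tprod k g) =
        PiTensorProduct.reindex k (fun _ : Fin ℓ => A) σ (tprod k f) *
          PiTensorProduct.reindex k (fun _ : Fin ℓ => A) σ (tprod k g) := by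
    intro f g
    rw [PiTensorProduct.tprod_mul_tprod, PiTensorProduct.reindex_tprod,
      PiTensorProduct.reindex_tprod, PiTensorProduct.reindex_tprod,
      PiTensorProduct.tprod_mul_tprod]
    rfl
  induction x using PiTensorProduct.induction_on with
  | smul_tprod r f =>
    induction y using PiTensorProduct.induction_on with
    | smul_tprod s g =>
      rw [smul_mul_smul_comm, map_smul, map_smul, map_smul, h, smul_mul_smul_comm]
    | add u v hu hv =>
      rw [mul_add, map_add, map_add, hu, hv, mul_add]
  | add u v hu hv =>
    rw [add_mul, map_add, map_add, hu, hv, add_mul]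

/-- The algebra `TS^ℓ(A)` of symmetric tensors, as a subalgebra of `A^{⊗ℓ}`. -/
noncomputable def tsSubalgebra : Subalgebra k (⨂[k] _ : Fin ℓ, A) where
  carrier := {x | ∀ σ : Equiv.Perm (Fin ℓ),
    PiTensorProduct.reindex k (fun _ : Fin ℓ => A) σ x = x}
  mul_mem' := fun hx hy σ => by
    rw [reindex_mul, hx σ, hy σ]
  one_mem' := fun σ => reindex_one k A ℓ σ
  add_mem' := fun hx hy σ => by rw [map_add, hx σ, hy σ]
  zero_mem' := fun σ => map_zero _
  algebraMap_mem' := fun r σ => by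
    rw [Algebra.algebraMap_eq_smul_one, map_smul, reindex_one]

end TS

/-!
Frobenius' higher characters of `ρ` are defined by `E₀ = 1` and
`Eₙ₊₁(b, a) = ρ(b) Eₙ(a) - ∑ⱼ Eₙ(a₁, …, b aⱼ, …, aₙ)`. They are symmetric because `ρ` is a Lie
homomorphism, and `Eₙ(a, …, a)` is the left-hand side of the `n`-th symmetric identity, so
polarization gives `E_{ℓ+1} = 0`. By the recursion, the linear map `L` on `A^{⊗ℓ}` induced by `E_ℓ`
then satisfies `L(sym_ℓ(b) x) = ρ(b) L(x)`, and `L(1) = ℓ!`; hence `L / ℓ!` is multiplicative on the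
algebra generated by the image of `sym_ℓ`. The higher character `E_ℓ` of `sym_ℓ` itself is the sum
over all permutations of the tensor factors, so this algebra is all of `TS^ℓ(A)`.
-/

open Equiv

section Polarization

variable {k M N ι : Type*} [CommSemiring k] [AddCommMonoid M] [Module k M] [AddCommGroup N]
  [Module k N] [Fintype ι]

theorem sum_neg_one_pow_card_of_forall_mem_compl [DecidableEq ι] (g : ι → ι) :
    ∑ s : Finset ι with ∀ i, g i ∈ sᶜ, (-1 : ℤ) ^ s.card =
      if Function.Bijective g then 1 else 0 := by
  have avoid_range : ({s | ∀ i, g i ∈ sᶜ} : Finset (Finset ι)) =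
      (Finset.univ.image g)ᶜ.powerset := by
    ext s
    simp only [Finset.mem_filter, Finset.mem_univ, true_and, Finset.mem_powerset,
      Finset.subset_compl_comm (s := s), Finset.image_subset_iff, forall_const]
  have image_eq_univ : Finset.univ.image g = Finset.univ ↔ Function.Bijective g := by
    rw [← Finset.coe_inj, Finset.coe_image, Finset.coe_univ, Set.image_univ, Set.range_eq_univ,
      Finite.surjective_iff_bijective]
  simp only [avoid_range, Finset.sum_powerset_neg_one_pow_card, Finset.compl_eq_empty_iff,
    image_eq_univ]

theorem sum_neg_one_pow_card_smul_map_sum_compl [DecidableEq ι]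
    (f : MultilinearMap k (fun _ : ι => M) N) (a : ι → M) :
    ∑ s : Finset ι, (-1 : ℤ) ^ s.card • f (fun _ => ∑ i ∈ sᶜ, a i) =
      ∑ σ : Perm ι, f (a ∘ σ) := by
  have expand (s : Finset ι) : f (fun _ => ∑ i ∈ sᶜ, a i) =
      ∑ g : ι → ι with ∀ i, g i ∈ sᶜ, f (a ∘ g) := by
    rw [f.map_sum_finset (fun _ i => a i) (fun _ => sᶜ)]
    exact Finset.sum_congr (by ext; simp) fun _ _ => rfl
  calc
    _ = ∑ g : ι → ι, ∑ s : Finset ι with ∀ i, g i ∈ sᶜ, (-1 : ℤ) ^ s.card • f (a ∘ g) := by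
      simp only [expand, Finset.smul_sum]
      exact Finset.sum_comm' (by simp)
    _ = ∑ g : ι → ι with Function.Bijective g, f (a ∘ g) := by
      simp_rw [← Finset.sum_smul, sum_neg_one_pow_card_of_forall_mem_compl, ite_smul, one_smul,
        zero_smul, ← Finset.sum_filter]
    _ = ∑ σ : Perm ι, f (a ∘ σ) := by
      rw [← Finset.sum_subtype_eq_sum_filter, Finset.subtype_univ]
      exact Fintype.sum_equiv Equiv.bijectiveEquiv _ _ fun _ => rfl

theorem factorial_card_smul_eq_zero_of_symmetric (f : MultilinearMap k (fun _ : ι => M) N)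
    (symm : ∀ (σ : Perm ι) (a : ι → M), f (a ∘ σ) = f a) (diag : ∀ x, f (fun _ => x) = 0)
    (a : ι → M) : (Fintype.card ι).factorial • f a = 0 := by
  classical
  calc
    (Fintype.card ι).factorial • f a = ∑ σ : Perm ι, f (a ∘ σ) := by
      simp only [symm, Finset.sum_const, Finset.card_univ, Fintype.card_perm]
    _ = 0 := by
      simp only [← sum_neg_one_pow_card_smul_map_sum_compl, diag, smul_zero, Finset.sum_const_zero]

end Polarization

section Extend

variable {ι κ M : Type*} [DecidableEq ι]

theorem extend_update [DecidableEq κ] {e : κ → ι} (he : Function.Injective e) (a : κ → M) (j : κ)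
    (c : M) (d : ι → M) :
    Function.extend e (Function.update a j c) d =
      Function.update (Function.extend e a d) (e j) c := by
  ext i
  obtain ⟨l, rfl⟩ | hi := em (∃ l, e l = i)
  · simp [Function.update_apply, he.extend_apply, he.eq_iff]
  · have i_ne : i ≠ e j := fun h => hi ⟨j, h.symm⟩
    simp [Function.extend_apply' _ _ _ hi, i_ne]

theorem extend_cons {n : ℕ} {e : Fin n → ι} (he : Function.Injective e) {i : ι}
    (hi : i ∉ Set.range e) (a : Fin n → M) (b : M) (d : ι → M) :
    Function.extend (Fin.cons i e : Fin (n + 1) → ι) (Fin.cons b a : Fin (n + 1) → M) d =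
      Function.update (Function.extend e a d) i b := by
  have inj : Function.Injective (Fin.cons i e : Fin (n + 1) → ι) :=
    Fin.cons_injective_iff.2 ⟨hi, he⟩
  ext l
  obtain ⟨j, rfl⟩ | hl := em (∃ j, (Fin.cons i e : Fin (n + 1) → ι) j = l)
  · rw [inj.extend_apply]
    cases j using Fin.cases with
    | zero => simp
    | succ j =>
      have ne_i : e j ≠ i := fun h => hi ⟨j, h⟩
      simp [ne_i, he.extend_apply]
  · rw [Function.extend_apply' _ _ _ hl]
    simp only [Fin.exists_fin_succ, Fin.cons_zero, Fin.cons_succ, not_or] at hl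
    rw [Function.update_of_ne (Ne.symm hl.1), Function.extend_apply' _ _ _ hl.2]

end Extend

section SlotMulLeft

variable {k A N ι : Type*} [CommSemiring k] [Semiring A] [Algebra k A] [AddCommMonoid N]
  [Module k N] [Fintype ι] [DecidableEq ι]

/-- `f (b a₁, a₂, …, aₙ) + ⋯ + f (a₁, …, aₙ₋₁, b aₙ)`: left multiplication by `b` in one
slot at a time, bundled to be linear in `b`. -/
noncomputable def slotMulLeft (f : MultilinearMap k (fun _ : ι => A) N) :
    A →ₗ[k] MultilinearMap k (fun _ : ι => A) N :=
  ∑ j, LinearMap.applyₗ f ∘ₗ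
    MultilinearMap.compLinearMapMultilinear.toLinearMap (fun _ => .id) j ∘ₗ .mul k A

theorem slotMulLeft_apply (f : MultilinearMap k (fun _ : ι => A) N) (b : A) (a : ι → A) :
    slotMulLeft f b a = ∑ j, f (Function.update a j (b * a j)) := by
  have comp_update (i j : ι) :
      Function.update (fun _ : ι => (LinearMap.id : A →ₗ[k] A)) j (LinearMap.mul k A b) i (a i) =
        Function.update a j (b * a j) i := by
    obtain rfl | h := eq_or_ne i j <;> simp [*]
  simp [slotMulLeft, comp_update]

theorem slotMulLeft_slotMulLeft_add (f : MultilinearMap k (fun _ : ι => A) N) (b c : A) :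
    slotMulLeft (slotMulLeft f c) b + slotMulLeft f (b * c) =
      slotMulLeft (slotMulLeft f b) c + slotMulLeft f (c * b) := by
  ext a
  have expand (b c : A) : slotMulLeft (slotMulLeft f c) b a = slotMulLeft f (c * b) a +
      ∑ j, ∑ i with i ≠ j, f (Function.update (Function.update a j (b * a j)) i (c * a i)) := by
    simp only [slotMulLeft_apply, ← Finset.sum_add_distrib]
    refine Finset.sum_congr rfl fun j _ => ?_
    rw [← Finset.sum_filter_add_sum_filter_not _ (· = j), Finset.filter_eq' _ j,
      if_pos (Finset.mem_univ j), Finset.sum_singleton]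
    congr 1
    · simp [mul_assoc]
    · exact Finset.sum_congr rfl fun i hi => by
        rw [Function.update_of_ne (Finset.mem_filter.1 hi).2]
  have off_diagonal_comm :
      ∑ j, ∑ i with i ≠ j, f (Function.update (Function.update a j (b * a j)) i (c * a i)) =
        ∑ j, ∑ i with i ≠ j,
          f (Function.update (Function.update a j (c * a j)) i (b * a i)) := by
    rw [Finset.sum_comm' (t' := Finset.univ) (s' := fun i => {j | j ≠ i}) (by simp [ne_comm])]
    refine Finset.sum_congr rfl fun i _ => Finset.sum_congr rfl fun j hj => ?_
    rw [Function.update_comm (Finset.mem_filter.1 hj).2.symm]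
  simp only [add_apply, expand, off_diagonal_comm]
  abel

theorem slotMulLeft_comp_perm {f : MultilinearMap k (fun _ : ι => A) N} {σ : Perm ι}
    (hσ : ∀ a, f (a ∘ σ) = f a) (b : A) (a : ι → A) :
    slotMulLeft f b (a ∘ σ) = slotMulLeft f b a := by
  simp only [slotMulLeft_apply, ← Equiv.sum_comp σ fun j => f (Function.update a j (b * a j))]
  refine Finset.sum_congr rfl fun j _ => ?_
  rw [← hσ (Function.update a (σ j) _), Function.update_comp_equiv, σ.symm_apply_apply,
    Function.comp_apply]

theorem slotMulLeft_cons {n : ℕ} (f : MultilinearMap k (fun _ : Fin (n + 1) => A) N) (b c : A)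
    (a : Fin n → A) :
    slotMulLeft f b (Fin.cons c a) =
      f (Fin.cons (b * c) a) + ∑ j, f (Fin.cons c (Function.update a j (b * a j))) := by
  simp [slotMulLeft_apply, Fin.sum_univ_succ, Fin.cons_update]

-- The slots in the range of `e` give the first sum; in the others, where the entry is `1`,
-- multiplication by `b` fills the slot.
theorem slotMulLeft_extend_one {n : ℕ} (f : MultilinearMap k (fun _ : ι => A) N) (e : Fin n ↪ ι)
    (b : A) (a : Fin n → A) :
    slotMulLeft f b (Function.extend e a 1) =
      ∑ j, f (Function.extend e (Function.update a j (b * a j)) 1) +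
        ∑ i : {i // i ∉ Set.range e}, f (Function.extend (Fin.cons i.1 e : Fin (n + 1) → ι)
          (Fin.cons b a : Fin (n + 1) → A) 1) := by
  rw [slotMulLeft_apply, ← Fintype.sum_subtype_add_sum_subtype (· ∈ Set.range e)]
  congr 1
  · refine Eq.symm (Finset.sum_equiv (.ofInjective e e.injective) (by simp) fun j _ => ?_)
    rw [extend_update e.injective, Equiv.ofInjective_apply, e.injective.extend_apply]
  · refine Finset.sum_congr rfl fun i _ => ?_
    rw [extend_cons e.injective i.2, Function.extend_apply' _ _ _ i.2, Pi.one_apply, mul_one]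

end SlotMulLeft

section HigherCharacter

variable {k A B : Type*} [CommRing k] [Ring A] [Algebra k A] [Ring B] [Algebra k B]

/-- Frobenius' higher characters of a linear map `ρ : A → B`: `E₀ = 1` and
`Eₙ₊₁(b, a₁, …, aₙ) = ρ(b) Eₙ(a₁, …, aₙ) - ∑ⱼ Eₙ(a₁, …, b aⱼ, …, aₙ)`. The recursion peels off the
first argument, and no commutativity is assumed. -/
noncomputable def higherCharacter (ρ : A →ₗ[k] B) :
    (n : ℕ) → MultilinearMap k (fun _ : Fin n => A) B
  | 0 => .constOfIsEmpty k _ 1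
  | n + 1 => LinearMap.uncurryLeft (M := fun _ : Fin (n + 1) => A)
      ({ toFun := fun b => (LinearMap.mulLeft k (ρ b)).compMultilinearMap (higherCharacter ρ n)
         map_add' := fun b c => by ext; simp [add_mul]
         map_smul' := fun r b => by ext; simp } - slotMulLeft (higherCharacter ρ n))

variable (ρ : A →ₗ[k] B)

@[simp]
theorem higherCharacter_zero (a : Fin 0 → A) : higherCharacter ρ 0 a = 1 := rfl

theorem higherCharacter_cons {n : ℕ} (b : A) (a : Fin n → A) :
    higherCharacter ρ (n + 1) (Fin.cons b a) =
      ρ b * higherCharacter ρ n a - slotMulLeft (higherCharacter ρ n) b a := by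
  simp [higherCharacter]

theorem higherCharacter_mem {S : Subalgebra k B} (hS : ∀ a, ρ a ∈ S) {n : ℕ} (a : Fin n → A) :
    higherCharacter ρ n a ∈ S := by
  induction n with
  | zero => exact S.one_mem
  | succ n ih =>
    rw [← Fin.cons_self_tail a, higherCharacter_cons, slotMulLeft_apply]
    exact S.sub_mem (S.mul_mem (hS _) (ih _)) (S.sum_mem fun _ _ => ih _)

theorem higherCharacter_one {ℓ : ℕ} (h1 : ρ 1 = ℓ • (1 : B)) (n : ℕ) :
    higherCharacter ρ n (fun _ => 1) = ℓ.descFactorial n := by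
  induction n with
  | zero => simp
  | succ n ih =>
    rw [← Fin.cons_self_tail (fun _ : Fin (n + 1) => (1 : A)), higherCharacter_cons,
      slotMulLeft_apply]
    simp only [Fin.tail_def, one_mul, Function.update_eq_self, ih, h1, Finset.sum_const,
      Finset.card_univ, Fintype.card_fin]
    obtain h | h := le_or_gt n ℓ
    · rw [Nat.descFactorial_succ, Nat.cast_mul, Nat.cast_sub h]
      simp [sub_mul]
    · simp [Nat.descFactorial_of_lt h]

theorem higherCharacter_cons_cons {n : ℕ} (b c : A) (a : Fin n → A) :
    higherCharacter ρ (n + 2) (Fin.cons b (Fin.cons c a)) =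
      (ρ b * ρ c - ρ (b * c)) * higherCharacter ρ n a -
        (ρ b * slotMulLeft (higherCharacter ρ n) c a +
          ρ c * slotMulLeft (higherCharacter ρ n) b a) +
        (slotMulLeft (slotMulLeft (higherCharacter ρ n) c) b +
          slotMulLeft (higherCharacter ρ n) (b * c)) a := by
  simp only [higherCharacter_cons, slotMulLeft_cons, Finset.sum_sub_distrib, ← Finset.mul_sum,
    ← slotMulLeft_apply, add_apply]
  noncomm_ring

variable {ρ} (hρ : ∀ a b, ρ ⁅a, b⁆ = ⁅ρ a, ρ b⁆)
include hρ

theorem higherCharacter_cons_cons_comm {n : ℕ} (b c : A) (a : Fin n → A) :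
    higherCharacter ρ (n + 2) (Fin.cons b (Fin.cons c a)) =
      higherCharacter ρ (n + 2) (Fin.cons c (Fin.cons b a)) := by
  have lie : ρ b * ρ c - ρ (b * c) = ρ c * ρ b - ρ (c * b) := by
    rw [sub_eq_sub_iff_sub_eq_sub, ← Ring.lie_def, ← hρ, Ring.lie_def, map_sub]
  rw [higherCharacter_cons_cons, higherCharacter_cons_cons, slotMulLeft_slotMulLeft_add]
  simp only [lie, add_comm]

theorem higherCharacter_comp_swap {n : ℕ} (i : Fin n) (a : Fin (n + 1) → A) :
    higherCharacter ρ (n + 1) (a ∘ swap i.castSucc i.succ) =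
      higherCharacter ρ (n + 1) a := by
  induction n with
  | zero => exact i.elim0
  | succ n ih =>
    cases a using Fin.consCases with | _ b a
    cases i using Fin.cases with
    | zero =>
      cases a using Fin.consCases with | _ c a
      have comp_swap : (Fin.cons b (Fin.cons c a) : Fin (n + 2) → A) ∘
          swap (Fin.castSucc 0) (Fin.succ 0) = Fin.cons c (Fin.cons b a) := by
        rw [Equiv.comp_swap_eq_update, ← Fin.cons_update]
        simp
      rw [comp_swap, higherCharacter_cons_cons_comm hρ]
    | succ i =>
      have comp_swap : (Fin.cons b a : Fin (n + 2) → A) ∘ swap i.succ.castSucc i.succ.succ =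
          Fin.cons b (a ∘ swap i.castSucc i.succ) := by
        simp [Equiv.comp_swap_eq_update, Fin.cons_update]
      rw [comp_swap, higherCharacter_cons, higherCharacter_cons, ih, slotMulLeft_comp_perm (ih i)]

theorem higherCharacter_comp_perm {n : ℕ} (σ : Perm (Fin n)) (a : Fin n → A) :
    higherCharacter ρ n (a ∘ σ) = higherCharacter ρ n a := by
  cases n with
  | zero => rw [Subsingleton.elim (a ∘ σ) a]
  | succ n =>
    have hσ : σ ∈ Submonoid.closure (Set.range fun i : Fin n => swap i.castSucc i.succ) := by
      simp [Perm.mclosure_swap_castSucc_succ]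
    induction hσ using Submonoid.closure_induction generalizing a with
    | mem σ hσ =>
      obtain ⟨i, rfl⟩ := hσ
      exact higherCharacter_comp_swap hρ i a
    | one => rfl
    | mul σ τ _ _ ihσ ihτ => rw [Perm.coe_mul, ← Function.comp_assoc, ihτ, ihσ]

end HigherCharacter

section CycleProd

variable {M R α : Type*} [CommMonoid M] [CommMonoid R] [Fintype α]

open Classical in
/-- The term `f(∏_{x ∈ C₁} a x) f(∏_{x ∈ C₂} a x) ⋯` of Frobenius' formula, over the cycles
`C₁, C₂, …` of `σ`. Fixed points count as cycles, so cycles are encoded as classes of the relation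
`σ.SameCycle`. -/
noncomputable def cycleProd (f : M → R) (σ : Perm α) (a : α → M) : R :=
  ∏ q : Quotient (Perm.SameCycle.setoid σ), f (∏ x with ⟦x⟧ = q, a x)

theorem cycleProd_eq_prod_of_surjective {κ : Type*} [Fintype κ] [DecidableEq κ] (f : M → R)
    {σ : Perm α} {F : α → κ} (surj : Function.Surjective F)
    (hF : ∀ x y, F x = F y ↔ σ.SameCycle x y) (a : α → M) :
    cycleProd f σ a = ∏ i, f (∏ x with F x = i, a x) := by
  classical
  let label : Quotient (Perm.SameCycle.setoid σ) ≃ κ :=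
    .ofBijective (Quotient.lift F fun x y => (hF x y).2)
      ⟨by rintro ⟨x⟩ ⟨y⟩ h; exact Quotient.sound ((hF x y).1 h), Quot.surjective_lift _ |>.2 surj⟩
  refine Fintype.prod_equiv label _ _ fun q => ?_
  congr! 3 with x
  exact label.injective.eq_iff.symm

theorem rel_of_sameCycle {α : Type*} {σ : Perm α} (r : Setoid α) (hr : ∀ x, r x (σ x)) {x y : α}
    (h : σ.SameCycle x y) : r x y := by
  obtain ⟨i, rfl⟩ := h
  induction i using Int.induction_on with
  | zero => exact r.refl x
  | succ i ih =>
    rw [add_comm, zpow_add, zpow_one]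
    exact r.trans ih (hr _)
  | pred i ih =>
    refine r.trans ih (r.symm ?_)
    rw [sub_eq_add_neg, add_comm, zpow_add, zpow_neg_one]
    simpa using hr (σ⁻¹ ((σ ^ (-i : ℤ)) x))

theorem sameCycle_decomposeFin_symm_succ {n : ℕ} (j : Fin (n + 1)) (e : Perm (Fin n)) {x y : Fin n}
    (h : e.SameCycle x y) : (Perm.decomposeFin.symm (j, e)).SameCycle x.succ y.succ := by
  set σ := Perm.decomposeFin.symm (j, e)
  refine rel_of_sameCycle ((Perm.SameCycle.setoid σ).comap Fin.succ) (fun x => ?_) h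
  change σ.SameCycle x.succ (e x).succ
  obtain hj | hj := eq_or_ne (e x).succ j
  · have twice : σ (σ x.succ) = (e x).succ := by simp [σ, ← hj]
    simp [← twice, Perm.SameCycle.refl]
  · have once : σ x.succ = (e x).succ := by
      simp [σ, Equiv.swap_apply_of_ne_of_ne (Fin.succ_ne_zero _) hj]
    simp [← once, Perm.SameCycle.refl]

-- `decomposeFin.symm (j, e)` arises from `e`, shifted to the successors, by adding `0` as a fixed
-- point if `j = 0` and by inserting it into the cycle through `j` otherwise.
theorem cycleProd_decomposeFin_symm_zero (f : M → R) {n : ℕ} (e : Perm (Fin n)) (b : M)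
    (a : Fin n → M) :
    cycleProd f (Perm.decomposeFin.symm (0, e)) (Fin.cons b a : Fin (n + 1) → M) =
      f b * cycleProd f e a := by
  classical
  let F : Fin (n + 1) → Option (Quotient (Perm.SameCycle.setoid e)) :=
    Fin.cons none fun x => some ⟦x⟧
  have surj : Function.Surjective F := by
    rintro (_ | q)
    · exact ⟨0, rfl⟩
    · obtain ⟨x, rfl⟩ := Quotient.exists_rep q
      exact ⟨x.succ, rfl⟩
  have hF (x y) : F x = F y ↔ (Perm.decomposeFin.symm (0, e)).SameCycle x y := by
    refine ⟨?_, rel_of_sameCycle (Setoid.ker F) fun x => ?_⟩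
    · cases x using Fin.cases <;> cases y using Fin.cases
      · simp [Perm.SameCycle.refl]
      · simp [F]
      · simp [F]
      · simpa [F] using fun h => sameCycle_decomposeFin_symm_succ 0 e (Quotient.exact h)
    · cases x using Fin.cases
      · simp
      · simp [F, Setoid.ker_def, Quotient.eq, Perm.SameCycle.setoid, Perm.SameCycle.refl]
  rw [cycleProd_eq_prod_of_surjective f surj hF, Fintype.prod_option]
  simp [F, cycleProd, Finset.prod_filter, Fin.prod_univ_succ]

theorem cycleProd_decomposeFin_symm_succ (f : M → R) {n : ℕ} (j : Fin n) (e : Perm (Fin n)) (b : M)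
    (a : Fin n → M) :
    cycleProd f (Perm.decomposeFin.symm (j.succ, e)) (Fin.cons b a : Fin (n + 1) → M) =
      cycleProd f e (Function.update a j (b * a j)) := by
  classical
  set σ := Perm.decomposeFin.symm (j.succ, e)
  let r : Fin (n + 1) → Fin n := Fin.cons j id
  let F (x : Fin (n + 1)) : Quotient (Perm.SameCycle.setoid e) := ⟦r x⟧
  have surj : Function.Surjective F := Quotient.mk_surjective.comp fun x => ⟨x.succ, rfl⟩
  have hF (x y) : F x = F y ↔ σ.SameCycle x y := by
    have sameCycle_succ (x) : σ.SameCycle x (r x).succ := by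
      cases x using Fin.cases with
      | zero => simpa [σ, r] using (Perm.SameCycle.refl σ 0).apply_right
      | succ x => rfl
    refine ⟨fun h => ?_, rel_of_sameCycle (Setoid.ker F) fun x => Quotient.sound ?_⟩
    · exact ((sameCycle_succ x).trans
        (sameCycle_decomposeFin_symm_succ j.succ e (Quotient.exact h))).trans
          (sameCycle_succ y).symm
    · cases x using Fin.cases with
      | zero => simp [σ, r]
      | succ x =>
        have r_apply : r (σ x.succ) = e x := by
          obtain h | h := eq_or_ne (e x) j
          · simp [σ, r, h]
          · simp [σ, r, Equiv.swap_apply_of_ne_of_ne (Fin.succ_ne_zero _)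
              (Fin.succ_injective _ |>.ne h)]
        rw [r_apply]
        exact (Perm.SameCycle.refl e x).apply_right
  have update_eq : Function.update a j (b * a j) = Pi.mulSingle j b * a := by
    ext x
    obtain rfl | h := eq_or_ne x j <;> simp [*]
  rw [cycleProd_eq_prod_of_surjective f surj hF, cycleProd, update_eq]
  refine Finset.prod_congr rfl fun q _ => congrArg f ?_
  simp only [Pi.mul_apply, Finset.prod_mul_distrib, Finset.prod_pi_mulSingle',
    Finset.mem_filter_univ]
  simp [F, r, Finset.prod_filter, Fin.prod_univ_succ]

section CycleLabel

variable [DecidableEq α] (σ : Perm α)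

/-- The cycle of `σ` through a given point: a nontrivial cycle, or a fixed point. -/
def cycleLabel (y : α) : σ.cycleFactorsFinset ⊕ {y // y ∉ σ.support} :=
  if hy : y ∈ σ.support then .inl ⟨σ.cycleOf y, Perm.cycleOf_mem_cycleFactorsFinset_iff.2 hy⟩
  else .inr ⟨y, hy⟩

variable {σ}

theorem cycleLabel_eq_inl_iff {y : α} {c : σ.cycleFactorsFinset} :
    cycleLabel σ y = .inl c ↔ y ∈ c.1.support := by
  rw [← Perm.eq_cycleOf_of_mem_cycleFactorsFinset_iff σ c c.2]
  by_cases hy : y ∈ σ.support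
  · simp only [cycleLabel, dif_pos hy, Sum.inl.injEq, Subtype.ext_iff, eq_comm]
  · have ne_cycleOf : c.1 ≠ σ.cycleOf y := fun h =>
      hy (Perm.cycleOf_mem_cycleFactorsFinset_iff.1 (h ▸ c.2))
    simp only [cycleLabel, dif_neg hy, reduceCtorEq, ne_cycleOf]

theorem cycleLabel_eq_inr_iff {y : α} {z : {y // y ∉ σ.support}} :
    cycleLabel σ y = .inr z ↔ y = z := by
  by_cases hy : y ∈ σ.support
  · simp only [cycleLabel, dif_pos hy, reduceCtorEq, false_iff]
    exact fun h => z.2 (h ▸ hy)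
  · simp only [cycleLabel, dif_neg hy, Sum.inr.injEq, Subtype.ext_iff]

theorem cycleLabel_surjective : Function.Surjective (cycleLabel σ) := by
  rintro (c | z)
  · obtain ⟨y, hy⟩ := (Perm.mem_cycleFactorsFinset_iff.1 c.2).1.nonempty_support
    exact ⟨y, cycleLabel_eq_inl_iff.2 hy⟩
  · exact ⟨z, cycleLabel_eq_inr_iff.2 rfl⟩

theorem cycleLabel_eq_iff (y z : α) : cycleLabel σ y = cycleLabel σ z ↔ σ.SameCycle y z := by
  by_cases hz : z ∈ σ.support
  · rw [show cycleLabel σ z = .inl _ from dif_pos hz, cycleLabel_eq_inl_iff, Perm.sameCycle_comm]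
    exact Perm.mem_support_cycleOf_iff' (Perm.mem_support.1 hz)
  · rw [show cycleLabel σ z = .inr _ from dif_neg hz, cycleLabel_eq_inr_iff]
    exact ⟨fun h => h ▸ .refl σ y, fun h => h.eq_of_right (Perm.notMem_support.1 hz)⟩

end CycleLabel

theorem cycleProd_const [DecidableEq α] (f : M → R) (σ : Perm α) (x : M) :
    cycleProd f σ (fun _ => x) = (σ.partition.parts.map fun m => f (x ^ m)).prod := by
  rw [cycleProd_eq_prod_of_surjective f cycleLabel_surjective cycleLabel_eq_iff,
    Fintype.prod_sum_type, Perm.parts_partition, Multiset.map_add, Multiset.prod_add,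
    Perm.cycleType_def, Multiset.map_map]
  congr 1
  · simp only [cycleLabel_eq_inl_iff, Finset.filter_univ_mem, Finset.prod_const]
    exact Finset.prod_coe_sort σ.cycleFactorsFinset fun c => f (x ^ c.support.card)
  · simp only [cycleLabel_eq_inr_iff, Finset.filter_eq', Finset.mem_univ, if_true, pow_one,
      Finset.prod_const, Finset.card_singleton, Finset.card_univ, Multiset.map_replicate,
      Multiset.prod_replicate, Fintype.card_subtype_compl, Fintype.card_coe]

theorem prod_map_parts_eq_prod_range {n : ℕ} (q : n.Partition) (f : ℕ → R) :
    (q.parts.map f).prod = ∏ i ∈ Finset.range n, f (i + 1) ^ q.parts.count (i + 1) := by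
  have parts_subset : q.parts.toFinset ⊆ Finset.Ico 1 (n + 1) := fun i hi => by
    rw [Multiset.mem_toFinset] at hi
    exact Finset.mem_Ico.2 ⟨q.parts_pos hi, Nat.lt_succ_of_le (q.le_of_mem_parts hi)⟩
  rw [Finset.prod_multiset_map_count, Finset.prod_subset parts_subset fun i _ hi => by
    rw [Multiset.count_eq_zero_of_notMem (by simpa using hi), pow_zero],
    Finset.range_eq_Ico, Finset.prod_Ico_add' (fun i => f i ^ q.parts.count i), zero_add]

theorem cycleCount_eq_count_parts_partition {m : ℕ} (σ : Perm (Fin m)) (j : ℕ) :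
    cycleCount σ j = σ.partition.parts.count j := by
  rw [cycleCount, Perm.parts_partition, Perm.sum_cycleType, Fintype.card_fin]

end CycleProd

section Frobenius

section Commutative

variable {k A B : Type*} [CommRing k] [CommRing A] [Algebra k A] [CommRing B] [Algebra k B]
  (ρ : A →ₗ[k] B)

theorem higherCharacter_eq_sum_cycleProd {n : ℕ} (a : Fin n → A) :
    higherCharacter ρ n a = ∑ σ : Perm (Fin n), (Perm.sign σ : ℤ) • cycleProd ρ σ a := by
  induction n with
  | zero => simp [cycleProd]
  | succ n ih =>
    cases a using Fin.consCases with | _ b a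
    rw [higherCharacter_cons, slotMulLeft_apply, ← Equiv.sum_comp Perm.decomposeFin.symm,
      Fintype.sum_prod_type, Fin.sum_univ_succ]
    simp [ih, cycleProd_decomposeFin_symm_zero, cycleProd_decomposeFin_symm_succ, sub_eq_add_neg,
      Finset.mul_sum, Perm.decomposeFin.symm_sign, Fin.succ_ne_zero, mul_left_comm (ρ b)]

theorem higherCharacter_diag_of_comm (n : ℕ) (a : A) :
    higherCharacter ρ n (fun _ => a) = symIdentLHS ρ n a := by
  rw [higherCharacter_eq_sum_cycleProd]
  simp only [symIdentLHS, cycleProd_const, prod_map_parts_eq_prod_range,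
    cycleCount_eq_count_parts_partition, Fintype.card_fin]
  rfl

end Commutative

variable {k A B : Type*} [CommRing k] [Ring A] [Algebra k A] [Ring B] [Algebra k B] {ρ : A →ₗ[k] B}

section Naturality

variable {A' B' : Type*} [Ring A'] [Algebra k A'] [Ring B'] [Algebra k B'] {ρ' : A' →ₗ[k] B'}
  {f : A →ₐ[k] A'} {g : B →ₐ[k] B'} (h : ∀ x, g (ρ x) = ρ' (f x))
include h

theorem map_higherCharacter {n : ℕ} (a : Fin n → A) :
    g (higherCharacter ρ n a) = higherCharacter ρ' n (f ∘ a) := by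
  induction n with
  | zero => simp
  | succ n ih =>
    cases a using Fin.consCases with | _ b a
    simp [Fin.comp_cons, higherCharacter_cons, slotMulLeft_apply, h, ih, Function.comp_update]

theorem map_symIdentLHS (n : ℕ) (a : A) : g (symIdentLHS ρ n a) = symIdentLHS ρ' n (f a) := by
  simp [symIdentLHS, map_list_prod, Function.comp_def, h]

end Naturality

variable (hρ : ∀ a b, ρ ⁅a, b⁆ = ⁅ρ a, ρ b⁆)
include hρ

-- Powers of `a` commute, hence so do their images under `ρ`: the identity takes place between the
-- commutative subalgebras that they generate.
open scoped IsMulCommutative in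
theorem higherCharacter_diag (n : ℕ) (a : A) :
    higherCharacter ρ n (fun _ => a) = symIdentLHS ρ n a := by
  let S := Algebra.adjoin k {a}
  let T := Algebra.adjoin k (ρ '' S)
  have : IsMulCommutative T := Algebra.isMulCommutative_adjoin k <| by
    rintro _ ⟨x, hx, rfl⟩ _ ⟨y, hy, rfl⟩
    rw [← sub_eq_zero, ← Ring.lie_def, ← hρ, Ring.lie_def, setLike_mul_comm hx hy, sub_self,
      map_zero]
  let ρS : S →ₗ[k] T := (ρ ∘ₗ S.val.toLinearMap).codRestrict T.toSubmodule fun x =>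
    Algebra.subset_adjoin ⟨x, x.2, rfl⟩
  have intertwines (x : S) : T.val (ρS x) = ρ (S.val x) := rfl
  have diag := congrArg T.val <|
    higherCharacter_diag_of_comm ρS n ⟨a, Algebra.self_mem_adjoin_singleton k a⟩
  rwa [map_higherCharacter intertwines, map_symIdentLHS intertwines] at diag

theorem factorial_smul_higherCharacter_eq_zero {n : ℕ} (hsym : ∀ a, symIdentLHS ρ n a = 0)
    (a : Fin n → A) : n.factorial • higherCharacter ρ n a = 0 := by
  simpa using factorial_card_smul_eq_zero_of_symmetric (higherCharacter ρ n)
    (higherCharacter_comp_perm hρ) (fun x => (higherCharacter_diag hρ n x).trans (hsym x)) a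

end Frobenius

section SymmetricTensors

variable (k : Type*) {A : Type*} [Field k] [Ring A] [Algebra k A]

/-- The symmetrization map `symTen` as a linear map, so that it has higher characters. -/
noncomputable def symTenLinear (ℓ : ℕ) : A →ₗ[k] ⨂[k] _ : Fin ℓ, A :=
  ∑ i, (PiTensorProduct.tprod k).toLinearMap (fun _ : Fin ℓ => (1 : A)) i

@[simp]
theorem symTenLinear_apply (ℓ : ℕ) (b : A) : symTenLinear k ℓ b = symTen k A ℓ b := by
  simp [symTenLinear, symTen]

theorem symTen_mem_tsSubalgebra (ℓ : ℕ) (b : A) : symTen k A ℓ b ∈ tsSubalgebra k A ℓ := by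
  intro σ
  rw [symTen, map_sum]
  refine Fintype.sum_equiv σ _ _ fun i => ?_
  rw [reindex_tprod]
  exact congrArg (PiTensorProduct.tprod k)
    (Function.update_comp_equiv (fun _ => (1 : A)) σ.symm i b)

theorem symTen_mul_tprod {ℓ : ℕ} (b : A) (a : Fin ℓ → A) :
    symTen k A ℓ b * tprod k a = slotMulLeft (tprod k) b a := by
  rw [symTen, Finset.sum_mul, slotMulLeft_apply]
  refine Finset.sum_congr rfl fun j _ => ?_
  rw [PiTensorProduct.tprod_mul_tprod]
  refine congrArg (PiTensorProduct.tprod k) (funext fun i => ?_)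
  obtain rfl | h := eq_or_ne i j <;> simp [*]

variable {k} in
theorem lift_symTen_mul {N : Type*} [AddCommMonoid N] [Module k N] {ℓ : ℕ}
    (f : MultilinearMap k (fun _ : Fin ℓ => A) N) (b : A) (x : ⨂[k] _ : Fin ℓ, A) :
    lift f (symTen k A ℓ b * x) = lift (slotMulLeft f b) x := by
  suffices lift f ∘ₗ LinearMap.mulLeft k (symTen k A ℓ b) = lift (slotMulLeft f b) from
    LinearMap.congr_fun this x
  ext a
  simp [symTen_mul_tprod, slotMulLeft_apply]

theorem higherCharacter_symTenLinear {ℓ n : ℕ} (a : Fin n → A) :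
    higherCharacter (symTenLinear k ℓ) n a =
      ∑ e : Fin n ↪ Fin ℓ, PiTensorProduct.tprod k (Function.extend e a 1) := by
  induction n with
  | zero => simp [Function.extend_of_isEmpty, PiTensorProduct.one_def]
  | succ n ih =>
    cases a using Fin.consCases with | _ b a
    rw [higherCharacter_cons, ih, slotMulLeft_apply,
      ← (Equiv.embeddingFinSucc n (Fin ℓ)).symm.sum_comp, Fintype.sum_sigma]
    simp only [symTenLinear_apply, Finset.mul_sum, symTen_mul_tprod, slotMulLeft_extend_one, ih,
      Finset.sum_add_distrib, Equiv.coe_embeddingFinSucc_symm]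
    rw [Finset.sum_comm, add_sub_cancel_left]

theorem lift_higherCharacter_symTenLinear {ℓ : ℕ} (x : ⨂[k] _ : Fin ℓ, A) :
    lift (higherCharacter (symTenLinear k ℓ) ℓ) x =
      ∑ σ : Perm (Fin ℓ), reindex k (fun _ => A) σ x := by
  suffices lift (higherCharacter (symTenLinear k ℓ) ℓ) =
      ∑ σ : Perm (Fin ℓ), (reindex k (fun _ => A) σ).toLinearMap by
    simp [this]
  ext a
  simp only [LinearMap.compMultilinearMap_apply, lift.tprod, higherCharacter_symTenLinear,
    LinearMap.sum_apply, LinearEquiv.coe_coe, reindex_tprod]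
  refine (Fintype.sum_equiv (Equiv.embeddingEquivOfFinite (Fin ℓ)).symm _ _ fun σ => ?_).symm
  refine congrArg (PiTensorProduct.tprod k) (funext fun i => ?_)
  obtain ⟨j, rfl⟩ := σ.surjective i
  rw [σ.symm_apply_apply]
  exact (σ.injective.extend_apply a 1 j).symm

theorem adjoin_range_symTen {ℓ : ℕ} (hk : (ℓ.factorial : k) ≠ 0) :
    Algebra.adjoin k (Set.range (symTen k A ℓ)) = tsSubalgebra k A ℓ := by
  refine le_antisymm (Algebra.adjoin_le ?_) fun x hx => ?_
  · rintro _ ⟨b, rfl⟩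
    exact symTen_mem_tsSubalgebra k ℓ b
  set S := Algebra.adjoin k (Set.range (symTen k A ℓ))
  have symmetrize_mem (x) : lift (higherCharacter (symTenLinear k ℓ) ℓ) x ∈ S := by
    induction x using PiTensorProduct.induction_on with
    | smul_tprod r a =>
      rw [map_smul, lift.tprod]
      refine S.smul_mem (higherCharacter_mem _ (fun b => ?_) a) r
      simpa using Algebra.subset_adjoin (Set.mem_range_self b)
    | add x y hx hy => simpa using S.add_mem hx hy
  have symmetrize_eq : lift (higherCharacter (symTenLinear k ℓ) ℓ) x = (ℓ.factorial : k) • x := by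
    rw [lift_higherCharacter_symTenLinear, Finset.sum_congr rfl fun σ _ => hx σ]
    simp [Fintype.card_perm, Nat.cast_smul_eq_nsmul]
  exact (Submodule.smul_mem_iff S.toSubmodule hk).1 (symmetrize_eq ▸ symmetrize_mem x)

end SymmetricTensors

section UniversalProperty

theorem map_mul_of_mem_adjoin {k S B : Type*} [CommSemiring k] [Semiring S] [Algebra k S]
    [Semiring B] [Algebra k B] {L : S →ₗ[k] B} {s : Set S} (L_one : L 1 = 1)
    (L_mul : ∀ y ∈ s, ∀ x, L (y * x) = L y * L x) {y : S} (hy : y ∈ Algebra.adjoin k s) (x : S) :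
    L (y * x) = L y * L x := by
  induction hy using Algebra.adjoin_induction generalizing x with
  | mem y hy => exact L_mul y hy x
  | algebraMap c => simp [Algebra.algebraMap_eq_smul_one, L_one]
  | add y z _ _ hy hz => rw [add_mul, map_add, map_add, hy, hz, add_mul]
  | mul y z _ _ hy hz => rw [mul_assoc, hy, hz, hy, mul_assoc]

variable {k A B : Type*} [Field k] [Ring A] [Algebra k A] [Ring B] [Algebra k B] {ℓ : ℕ}

theorem lift_higherCharacter_symTen_mul {ρ : A →ₗ[k] B} (hE : higherCharacter ρ (ℓ + 1) = 0)
    (b : A) (x : ⨂[k] _ : Fin ℓ, A) :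
    lift (higherCharacter ρ ℓ) (symTen k A ℓ b * x) = ρ b * lift (higherCharacter ρ ℓ) x := by
  have slot : lift (slotMulLeft (higherCharacter ρ ℓ) b) =
      LinearMap.mulLeft k (ρ b) ∘ₗ lift (higherCharacter ρ ℓ) := by
    ext a
    have cons_eq_zero := higherCharacter_cons ρ b a
    rw [hE, zero_apply, eq_comm, sub_eq_zero] at cons_eq_zero
    simpa using cons_eq_zero.symm
  rw [lift_symTen_mul, slot, LinearMap.comp_apply, LinearMap.mulLeft_apply]

theorem lift_higherCharacter_one {ρ : A →ₗ[k] B} (h1 : ρ 1 = ℓ • (1 : B)) :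
    lift (higherCharacter ρ ℓ) 1 = (ℓ.factorial : k) • (1 : B) := by
  rw [PiTensorProduct.one_def, lift.tprod, Nat.cast_smul_eq_nsmul, nsmul_one,
    ← Nat.descFactorial_self]
  exact higherCharacter_one ρ h1 ℓ

theorem existsUnique_algHom_symTen {ρ : A → B} (hk : (ℓ.factorial : k) ≠ 0)
    (L : (⨂[k] _ : Fin ℓ, A) →ₗ[k] B) (L_one : L 1 = 1)
    (L_symTen_mul : ∀ b x, L (symTen k A ℓ b * x) = ρ b * L x) :
    ∃! φ : tsSubalgebra k A ℓ →ₐ[k] B,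
      ∀ (a : A) (h : symTen k A ℓ a ∈ tsSubalgebra k A ℓ),
        φ ⟨symTen k A ℓ a, h⟩ = ρ a := by
  have L_symTen (b) : L (symTen k A ℓ b) = ρ b := by simpa [L_one] using L_symTen_mul b 1
  have L_mul (x y : tsSubalgebra k A ℓ) : L (x * y) = L x * L y := by
    refine map_mul_of_mem_adjoin (s := Set.range (symTen k A ℓ)) L_one ?_ ?_ y.1
    · rintro _ ⟨b, rfl⟩ x
      rw [L_symTen_mul, L_symTen]
    · exact (adjoin_range_symTen k hk).ge x.2
  refine ⟨.ofLinearMap (L ∘ₗ (tsSubalgebra k A ℓ).val.toLinearMap) L_one L_mul,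
    fun a _ => L_symTen a, fun φ hφ => ?_⟩
  refine AlgHom.ext_of_eq_adjoin (adjoin_range_symTen k hk).symm ?_
  rintro _ ⟨a, rfl⟩
  exact (hφ a _).trans (L_symTen a).symm

end UniversalProperty

theorem ts_universal_property_general (k A : Type*) [Field k] [Ring A] [Algebra k A]
    (ℓ : ℕ) (hk : ((ℓ + 1).factorial : k) ≠ 0) (B : Type*) [Ring B] [Algebra k B]
    (ρ : A → B) (hlin : IsLinearMap k ρ)
    (hbr : ∀ a b : A, ρ (a * b - b * a) = ρ a * ρ b - ρ b * ρ a)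
    (hsym : ∀ a : A, symIdentLHS ρ (ℓ + 1) a = 0)
    (h1 : ρ 1 = ℓ • (1 : B)) :
    ∃! φ : tsSubalgebra k A ℓ →ₐ[k] B,
      ∀ (a : A) (h : symTen k A ℓ a ∈ tsSubalgebra k A ℓ),
        φ ⟨symTen k A ℓ a, h⟩ = ρ a := by
  obtain ⟨ρ, rfl⟩ : ∃ r : A →ₗ[k] B, r = ρ := ⟨hlin.mk' ρ, rfl⟩
  have hℓ : (ℓ.factorial : k) ≠ 0 := by
    rw [Nat.factorial_succ, Nat.cast_mul] at hk
    exact right_ne_zero_of_mul hk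
  have higherCharacter_eq_zero : higherCharacter ρ (ℓ + 1) = 0 := by
    ext a
    have factorial_smul := factorial_smul_higherCharacter_eq_zero hbr hsym a
    rw [← Nat.cast_smul_eq_nsmul k] at factorial_smul
    exact (smul_eq_zero_iff_right hk).1 factorial_smul
  refine existsUnique_algHom_symTen hℓ ((ℓ.factorial : k)⁻¹ • lift (higherCharacter ρ ℓ)) ?_ ?_
  · rw [LinearMap.smul_apply, lift_higherCharacter_one h1, inv_smul_smul₀ hℓ]
  · intro b x
    rw [LinearMap.smul_apply, LinearMap.smul_apply,
      lift_higherCharacter_symTen_mul higherCharacter_eq_zero, mul_smul_comm]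

/-- universal property of `TS^ℓ(A)`.  For every unital associative `k`-algebra `B`
and every Lie algebra homomorphism `ρ : A⁻ → B⁻` (a linear map preserving commutators) which
satisfies the `(ℓ+1)`-st symmetric identity and `ρ(1_A) = ℓ·1_B`, there is a unique unital
algebra homomorphism `φ : TS^ℓ(A) → B` with `φ ∘ sym_ℓ = ρ`. -/
theorem ts_universal_property (k A : Type*) [Field k] [CharZero k] [Ring A] [Algebra k A]
    (ℓ : ℕ) (hℓ : 0 < ℓ) (B : Type*) [Ring B] [Algebra k B]
    (ρ : A → B) (hlin : IsLinearMap k ρ)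
    (hbr : ∀ a b : A, ρ (a * b - b * a) = ρ a * ρ b - ρ b * ρ a)
    (hsym : ∀ a : A, symIdentLHS ρ (ℓ + 1) a = 0)
    (h1 : ρ 1 = ℓ • (1 : B)) :
    ∃! φ : tsSubalgebra k A ℓ →ₐ[k] B,
      ∀ (a : A) (h : symTen k A ℓ a ∈ tsSubalgebra k A ℓ),
        φ ⟨symTen k A ℓ a, h⟩ = ρ a :=
  ts_universal_property_general k A ℓ (Nat.cast_ne_zero.2 (ℓ + 1).factorial_ne_zero) B ρ hlin hbr
    hsym h1
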